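/- arXiv:1701.08940 — 2 statements merged into one kernel-verified Lean document; each statement's English description precedes it below -/
import Mathlib

section
/- Let τ ∈ H. For every y ∈ ℝ the function (w,z) ↦ φ*_{−1/τ}(w,z)·e(−wx+zy) is Lebesgue integrable on ℝ², and for every (x,y) ∈ ℝ² with x ≠ 0 one has φ*_τ(x,y) − τ^{−1}·∫_{ℝ²} φ*_{−1/τ}(w,z)·e(−wx+zy) dw dz = e(((y²−x²)/2)τ)·sgn(x)·erfc(√(−iπτ)·|x|), where the square root is principal and erfc is the entire extension of the complementary error function. -/
open MeasureTheory Filter Set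

noncomputable section

/-- `e(z) = exp(2πiz)` -/
def eC (z : ℂ) : ℂ := Complex.exp (2 * Real.pi * Complex.I * z)

/-- The complementary error function `erfc(x) = (2/√π)∫_x^∞ e^{-r²} dr`. -/
def erfc (x : ℝ) : ℝ := (2 / Real.sqrt Real.pi) * ∫ r in Set.Ioi x, Real.exp (-(r ^ 2))

/-- The entire extension of the complementary error function:
`erfc(z) = 1 - (2/√π)∫_0^1 z·e^{-z²t²} dt`. -/
def erfcC (z : ℂ) : ℂ :=
  1 - (2 / Real.sqrt Real.pi) * ∫ t in (0:ℝ)..1, z * Complex.exp (-(z ^ 2) * (t : ℂ) ^ 2)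

/-- Principal square root of a complex number. -/
def csqrt (z : ℂ) : ℂ := z ^ (1 / 2 : ℂ)

/-- `φ*_τ(x,y) = e(((y²-x²)/2)τ)·sgn(x)·erfc(√(2πv)|x|)`. -/
def phiStar (τ : ℂ) (x y : ℝ) : ℂ :=
  eC ((((y : ℂ) ^ 2 - (x : ℂ) ^ 2) / 2) * τ) * (Real.sign x : ℂ) *
    (erfc (Real.sqrt (2 * Real.pi * τ.im) * |x|) : ℂ)

/-!
The `z`-integral is a Gaussian, so everything rests on the Fourier transform `G` of
`f(w) = exp(s²w²)·sgn(w)·erfc(c|w|)`. Away from `0`, `f' = 2s²w f - (2c/√π) exp(-(c²-s²)w²)`, and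
`f` jumps by `2` at `0`; on the Fourier side this is a first-order linear differential equation for
`G` with a Gaussian inhomogeneity. After multiplication by the integrating factor `exp(-π²x²/s²)`
both sides are derivatives, those on the right of error functions, and `G(0) = 0` because `f` is
odd. For `φ*_{-1/τ}` the two error functions are `erfc(√(2πv)|x|)`, which cancels `φ*_τ`, and
`erfc(√(-iπτ)|x|)`.
-/

open scoped Topology FourierTransform ComplexConjugate Real
open Complex (I)

section Jump

variable {E : Type*} [NormedAddCommGroup E] [NormedSpace ℝ E] [CompleteSpace E] {f f' : ℝ → E}
  {a : ℝ} {l r : E}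

lemma setIntegral_Ioi_of_hasDerivAt_of_tendsto_nhdsGT
    (hf : IntegrableOn f (Ioi a)) (hf' : IntegrableOn f' (Ioi a))
    (hderiv : ∀ x ∈ Ioi a, HasDerivAt f (f' x) x) (hr : Tendsto f (𝓝[>] a) (𝓝 r)) :
    ∫ x in Ioi a, f' x = -r := by
  have hzero := tendsto_zero_of_hasDerivAt_of_integrableOn_Ioi hderiv hf' hf
  have hcont : ContinuousWithinAt (Function.update f a r) (Ici a) a := by
    rw [continuousWithinAt_update_same, Ici_sdiff_left]
    exact hr
  have hderiv' : ∀ x ∈ Ioi a, HasDerivAt (Function.update f a r) (f' x) x := fun x hx =>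
    (hderiv x hx).congr_of_eventuallyEq <|
      (eventually_ne_nhds (ne_of_gt hx)).mono fun y hy => Function.update_of_ne hy _ _
  have hzero' : Tendsto (Function.update f a r) atTop (𝓝 0) :=
    hzero.congr' <| (eventually_ne_atTop a).mono fun y hy => (Function.update_of_ne hy _ _).symm
  rw [integral_Ioi_of_hasDerivAt_of_tendsto hcont hderiv' hf' hzero', Function.update_self,
    zero_sub]

lemma integral_eq_sub_of_hasDerivAt_of_jump
    (hf : Integrable f) (hf' : Integrable f') (hderiv : ∀ x ≠ a, HasDerivAt f (f' x) x)
    (hl : Tendsto f (𝓝[<] a) (𝓝 l)) (hr : Tendsto f (𝓝[>] a) (𝓝 r)) :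
    ∫ x, f' x = l - r := by
  have hright : ∫ x in Ioi a, f' x = -r :=
    setIntegral_Ioi_of_hasDerivAt_of_tendsto_nhdsGT hf.integrableOn hf'.integrableOn
      (fun x hx => hderiv x (ne_of_gt hx)) hr
  have hreflect : ∫ x in Ioi (-a), -f' (-x) = -l := by
    refine setIntegral_Ioi_of_hasDerivAt_of_tendsto_nhdsGT (f := fun x => f (-x))
      hf.comp_neg.integrableOn hf'.comp_neg.neg.integrableOn (fun x hx => ?_) ?_
    · have hx' : -x ≠ a := (neg_lt.mp hx).ne
      simpa [Function.comp_def] using (hderiv (-x) hx').scomp x (hasDerivAt_neg x)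
    · exact hl.comp (by simpa using tendsto_neg_nhdsGT_neg (a := a))
  have hleft : ∫ x in Iic a, f' x = l := by
    rw [integral_neg, integral_comp_neg_Ioi, neg_neg] at hreflect
    exact neg_injective hreflect
  rw [← intervalIntegral.integral_Iic_add_Ioi hf'.integrableOn hf'.integrableOn, hleft, hright,
    sub_eq_add_neg]

end Jump

section Fourier

variable {E : Type*} [NormedAddCommGroup E] [NormedSpace ℂ E] {f g : ℝ → E}

lemma integrable_cexp_smul (hf : Integrable f) (x : ℝ) :
    Integrable fun w : ℝ => Complex.exp (-2 * π * I * x * w) • f w := by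
  refine ((Real.fourierIntegral_convergent_iff x).2 hf).congr (ae_of_all _ fun w => ?_)
  simp only [Circle.smul_def, Real.fourierChar_apply, RCLike.inner_apply, conj_trivial]
  congr 2
  push_cast
  ring

lemma fourier_eq_integral_cexp_smul (f : ℝ → E) (x : ℝ) :
    𝓕 f x = ∫ w : ℝ, Complex.exp (-2 * π * I * x * w) • f w := by
  rw [Real.fourier_real_eq_integral_exp_smul]
  congr! 4
  push_cast
  ring

lemma fourier_of_hasDerivAt_of_jump [CompleteSpace E] {f' : ℝ → E} {a : ℝ} {l r : E}
    (hf : Integrable f) (hf' : Integrable f') (hderiv : ∀ w ≠ a, HasDerivAt f (f' w) w)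
    (hl : Tendsto f (𝓝[<] a) (𝓝 l)) (hr : Tendsto f (𝓝[>] a) (𝓝 r)) (x : ℝ) :
    𝓕 f' x = (2 * π * I * x : ℂ) • 𝓕 f x - Complex.exp (-2 * π * I * x * a) • (r - l) := by
  set u : ℝ → ℂ := fun w => Complex.exp (-2 * π * I * x * w) with hu
  have hu' (w : ℝ) : HasDerivAt u (-(2 * π * I * x) * u w) w := by
    refine ((hasDerivAt_id w).ofReal_comp.const_mul (-2 * π * I * x)).cexp.congr_deriv ?_
    simp only [hu, id]
    push_cast
    ring
  have hf_int := integrable_cexp_smul hf x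
  have hf'_int := integrable_cexp_smul hf' x
  have hparts : ∫ w, (-(2 * π * I * x : ℂ) • u w • f w + u w • f' w) = u a • l - u a • r := by
    refine integral_eq_sub_of_hasDerivAt_of_jump (a := a) hf_int
      ((hf_int.fun_smul _).add hf'_int) (fun w hw => ?_) ?_ ?_
    · refine ((hu' w).smul (hderiv w hw)).congr_deriv ?_
      module
    · exact (hu' a).continuousAt.continuousWithinAt.tendsto.smul hl
    · exact (hu' a).continuousAt.continuousWithinAt.tendsto.smul hr
  rw [integral_add (hf_int.fun_smul _) hf'_int, integral_smul, ← fourier_eq_integral_cexp_smul,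
    ← fourier_eq_integral_cexp_smul, neg_smul, neg_add_eq_iff_eq_add] at hparts
  rw [hparts, smul_sub]
  abel

lemma fourier_const_smul (a : ℂ) (f : ℝ → E) (x : ℝ) : 𝓕 (a • f) x = a • 𝓕 f x := by
  simp only [fourier_eq_integral_cexp_smul, Pi.smul_apply, smul_comm _ a, integral_smul]

lemma fourier_add_of_integrable (hf : Integrable f) (hg : Integrable g) (x : ℝ) :
    𝓕 (f + g) x = 𝓕 f x + 𝓕 g x := by
  simp only [fourier_eq_integral_cexp_smul, Pi.add_apply, smul_add]
  exact integral_add (integrable_cexp_smul hf x) (integrable_cexp_smul hg x)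

end Fourier

lemma ofReal_sqrt_pi_ne_zero : (√π : ℂ) ≠ 0 :=
  Complex.ofReal_ne_zero.mpr (Real.sqrt_pos.mpr Real.pi_pos).ne'

lemma ofReal_sqrt_pi_sq : (√π : ℂ) ^ 2 = π := by
  rw [← Complex.ofReal_pow, Real.sq_sqrt Real.pi_pos.le]

lemma erfc_nonneg (x : ℝ) : 0 ≤ erfc x :=
  mul_nonneg (by positivity) (integral_nonneg fun r => (Real.exp_pos _).le)

lemma integrable_exp_neg_sq : Integrable fun r : ℝ => Real.exp (-(r ^ 2)) := by
  simpa using integrable_exp_neg_mul_sq one_pos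

lemma integral_Ioi_exp_neg_sq : ∫ r in Ioi (0 : ℝ), Real.exp (-(r ^ 2)) = √π / 2 := by
  simpa using integral_gaussian_Ioi 1

lemma erfc_le_exp_neg_sq {x : ℝ} (hx : 0 ≤ x) : erfc x ≤ Real.exp (-(x ^ 2)) := by
  have hshift : ∫ r in Ioi x, Real.exp (-(r ^ 2)) = ∫ r in Ioi 0, Real.exp (-((r + x) ^ 2)) := by
    simpa using ((measurePreserving_add_right volume x).setIntegral_preimage_emb
      (measurableEmbedding_addRight x) (fun r => Real.exp (-(r ^ 2))) (Ioi x)).symm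
  have hle : ∫ r in Ioi 0, Real.exp (-((r + x) ^ 2)) ≤
      ∫ r in Ioi 0, Real.exp (-(x ^ 2)) * Real.exp (-(r ^ 2)) := by
    refine setIntegral_mono_on (integrable_exp_neg_sq.comp_add_right x).integrableOn
      (integrable_exp_neg_sq.const_mul _).integrableOn measurableSet_Ioi fun r hr => ?_
    rw [← Real.exp_add, Real.exp_le_exp]
    nlinarith [mul_nonneg (mem_Ioi.mp hr).le hx]
  rw [integral_const_mul, integral_Ioi_exp_neg_sq] at hle
  calc erfc x ≤ 2 / √π * (Real.exp (-(x ^ 2)) * (√π / 2)) := by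
        rw [erfc, hshift]
        gcongr
    _ = Real.exp (-(x ^ 2)) := by field_simp

lemma erfcC_ofReal (x : ℝ) : erfcC x = erfc x := by
  have hsubst : ∫ t in (0 : ℝ)..1, (x : ℂ) * Complex.exp (-((x : ℂ) ^ 2) * (t : ℂ) ^ 2) =
      ((∫ r in (0 : ℝ)..x, Real.exp (-(r ^ 2)) : ℝ) : ℂ) := by
    have h := intervalIntegral.smul_integral_comp_mul_left (a := 0) (b := 1)
      (fun r : ℝ => Real.exp (-(r ^ 2))) x
    rw [mul_zero, mul_one] at h
    rw [← h, smul_eq_mul, ← intervalIntegral.integral_const_mul, ← intervalIntegral.integral_ofReal]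
    congr! 2 with t
    push_cast
    ring_nf
  have htail := intervalIntegral.integral_interval_add_Ioi
    (integrable_exp_neg_sq.integrableOn (s := Ioi 0))
    (integrable_exp_neg_sq.integrableOn (s := Ioi x))
  rw [integral_Ioi_exp_neg_sq, ← eq_sub_iff_add_eq] at htail
  rw [erfcC, hsubst, htail, erfc]
  have := ofReal_sqrt_pi_ne_zero
  push_cast
  field_simp
  ring

lemma erfcC_zero : erfcC 0 = 1 := by simp [erfcC]

lemma erfcC_neg (z : ℂ) : erfcC (-z) = 2 - erfcC z := by
  simp only [erfcC, neg_sq, neg_mul, intervalIntegral.integral_neg]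
  ring

lemma hasDerivAt_erfcC (z : ℂ) :
    HasDerivAt erfcC (-(2 / √π) * Complex.exp (-(z ^ 2))) z := by
  obtain ⟨F, hF⟩ : Complex.IsExactOn (fun w => Complex.exp (-(w ^ 2))) univ :=
    Differentiable.isExactOn_univ (by fun_prop)
  have herfcC (w : ℂ) : erfcC w = 1 - 2 / √π * (F w - F 0) := by
    have hray (t : ℝ) : HasDerivAt (fun t : ℝ => F (w * t))
        (w * Complex.exp (-(w ^ 2) * (t : ℂ) ^ 2)) t := by
      refine ((hF (w * t) (mem_univ _)).comp t
        ((hasDerivAt_id t).ofReal_comp.const_mul w)).congr_deriv ?_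
      simp only [mul_pow, Complex.ofReal_one, mul_one, neg_mul]
      ring
    rw [erfcC, intervalIntegral.integral_eq_sub_of_hasDerivAt (fun t _ => hray t)
      (Continuous.intervalIntegrable (by fun_prop) _ _)]
    simp
  rw [funext herfcC]
  refine ((((hF z (mem_univ z)).sub_const (F 0)).const_mul (2 / √π : ℂ)).const_sub 1).congr_deriv ?_
  ring

lemma hasDerivAt_erfcC_mul_ofReal (z : ℂ) (x : ℝ) :
    HasDerivAt (fun x : ℝ => erfcC (z * x))
      (-(2 / √π) * z * Complex.exp (-((z * x) ^ 2))) x := by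
  refine ((hasDerivAt_erfcC (z * x)).comp x
    ((hasDerivAt_id x).ofReal_comp.const_mul z)).congr_deriv ?_
  simp only [Complex.ofReal_one, mul_one]
  ring

lemma continuous_erfcC_mul_ofReal (z : ℂ) : Continuous fun x : ℝ => erfcC (z * x) :=
  continuous_iff_continuousAt.mpr fun x => (hasDerivAt_erfcC_mul_ofReal z x).continuousAt

lemma sign_mul_one_sub_erfcC_mul_abs (z : ℂ) (x : ℝ) :
    (Real.sign x : ℂ) * (1 - erfcC (z * (|x| : ℝ))) = 1 - erfcC (z * x) := by
  rcases lt_trichotomy x 0 with hx | rfl | hx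
  · rw [Real.sign_of_neg hx, abs_of_neg hx, Complex.ofReal_neg, Complex.ofReal_neg, mul_neg,
      erfcC_neg, Complex.ofReal_one]
    ring
  · simp [erfcC_zero]
  · simp [Real.sign_of_pos hx, abs_of_pos hx]

lemma hasDerivAt_cexp_neg_sq_mul_ofReal (z : ℂ) (x : ℝ) :
    HasDerivAt (fun x : ℝ => Complex.exp (-((z * x) ^ 2)))
      (-(2 * z ^ 2 * x) * Complex.exp (-((z * x) ^ 2))) x := by
  refine (((hasDerivAt_id x).ofReal_comp.const_mul z).pow 2).neg.cexp.congr_deriv ?_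
  simp only [Pi.neg_apply, Pi.pow_apply, id]
  push_cast
  ring

lemma re_ofReal_div_pos {r : ℝ} {z : ℂ} (hr : 0 < r) (hz : 0 < z.re) : 0 < (r / z : ℂ).re := by
  have hz₀ : 0 < Complex.normSq z := Complex.normSq_pos.mpr fun h => by simp [h] at hz
  rw [Complex.div_re, Complex.ofReal_re, Complex.ofReal_im, zero_mul, zero_div, add_zero]
  positivity

lemma fourier_cexp_neg_sq_mul_sq {t : ℂ} (ht : 0 < t.re) (ht₂ : 0 < (t ^ 2).re) (x : ℝ) :
    𝓕 (fun w : ℝ => Complex.exp (-(t ^ 2) * (w : ℂ) ^ 2)) x =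
      √π / t * Complex.exp (-((π / t * x) ^ 2)) := by
  have ht₀ : t ≠ 0 := fun h => by simp [h] at ht
  have hre : 0 < (√π / t : ℂ).re := re_ofReal_div_pos (Real.sqrt_pos.mpr Real.pi_pos) ht
  have hroot : ((π : ℂ) / t ^ 2) ^ (1 / 2 : ℂ) = √π / t := by
    rw [← ofReal_sqrt_pi_sq, ← div_pow, one_div, Complex.sq_cpow_two_inv hre]
  have hexponent : (-((π / t * x) ^ 2) : ℂ) = -(-2 * π * x) ^ 2 / (4 * t ^ 2) := by
    field_simp
    ring
  rw [fourier_eq_integral_cexp_smul, hexponent, ← hroot, ← fourierIntegral_gaussian ht₂]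
  congr! 4
  ring

lemma eventually_sign_eq {w : ℝ} (hw : w ≠ 0) : ∀ᶠ v in 𝓝 w, Real.sign v = Real.sign w := by
  rcases hw.lt_or_gt with hw | hw
  · filter_upwards [eventually_lt_nhds hw] with v hv
    rw [Real.sign_of_neg hv, Real.sign_of_neg hw]
  · filter_upwards [eventually_gt_nhds hw] with v hv
    rw [Real.sign_of_pos hv, Real.sign_of_pos hw]

/-- The product of a Gaussian with `sgn(w)·erfc(c|w|)`: for `a = -πiσ` and `c = √(2π Im σ)`, the
factor of `φ*_σ` that depends on its first variable. -/
def gaussErfc (a : ℂ) (c w : ℝ) : ℂ :=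
  Complex.exp (a * (w : ℂ) ^ 2) * (Real.sign w : ℂ) * (erfc (c * |w|) : ℂ)

section GaussErfc

variable (a : ℂ) (c : ℝ)

lemma gaussErfc_neg (w : ℝ) : gaussErfc a c (-w) = -gaussErfc a c w := by
  simp [gaussErfc, Real.sign_neg]

lemma gaussErfc_eq (w : ℝ) :
    gaussErfc a c w = Complex.exp (a * (w : ℂ) ^ 2) * (Real.sign w - 1 + erfcC (c * w)) := by
  have h := sign_mul_one_sub_erfcC_mul_abs c w
  rw [← Complex.ofReal_mul, erfcC_ofReal] at h
  rw [gaussErfc]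
  linear_combination -Complex.exp (a * (w : ℂ) ^ 2) * h

lemma hasDerivAt_gaussErfc {w : ℝ} (hw : w ≠ 0) :
    HasDerivAt (gaussErfc a c)
      (2 * a * w * gaussErfc a c w -
        2 * c / √π * Complex.exp (-((c : ℂ) ^ 2 - a) * (w : ℂ) ^ 2)) w := by
  have hlocal : gaussErfc a c =ᶠ[𝓝 w] fun v =>
      Complex.exp (a * (v : ℂ) ^ 2) * (Real.sign w - 1 + erfcC (c * v)) :=
    (eventually_sign_eq hw).mono fun v hv => by rw [gaussErfc_eq, hv]
  have hexp := (((hasDerivAt_id w).ofReal_comp.pow 2).const_mul a).cexp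
  refine ((hexp.mul ((hasDerivAt_erfcC_mul_ofReal c w).const_add
    (Real.sign w - 1 : ℂ))).congr_of_eventuallyEq hlocal).congr_deriv ?_
  have hsplit : Complex.exp (-((c : ℂ) ^ 2 - a) * (w : ℂ) ^ 2) =
      Complex.exp (a * (w : ℂ) ^ 2) * Complex.exp (-((c * w : ℂ) ^ 2)) := by
    rw [← Complex.exp_add]
    ring_nf
  rw [hsplit, gaussErfc_eq]
  simp only [Pi.pow_apply, id]
  push_cast
  ring

lemma tendsto_gaussErfc {l : Filter ℝ} (hl : l ≤ 𝓝 0) {ε : ℝ}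
    (hsign : ∀ᶠ w in l, Real.sign w = ε) : Tendsto (gaussErfc a c) l (𝓝 ε) := by
  have hcont : Continuous fun w : ℝ =>
      Complex.exp (a * (w : ℂ) ^ 2) * (ε - 1 + erfcC (c * w)) :=
    Continuous.mul (by fun_prop) (continuous_const.add (continuous_erfcC_mul_ofReal c))
  have hzero := (hcont.tendsto 0).mono_left hl
  simp only [Complex.ofReal_zero, mul_zero, erfcC_zero, sub_add_cancel, ne_eq, OfNat.ofNat_ne_zero,
    not_false_eq_true, zero_pow, Complex.exp_zero, one_mul] at hzero
  exact hzero.congr' (hsign.mono fun w hw => by rw [gaussErfc_eq, hw])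

lemma tendsto_gaussErfc_nhdsGT : Tendsto (gaussErfc a c) (𝓝[>] 0) (𝓝 1) := by
  have hsign : ∀ᶠ w in 𝓝[>] (0 : ℝ), Real.sign w = 1 :=
    eventually_mem_nhdsWithin.mono fun w hw => Real.sign_of_pos hw
  simpa using tendsto_gaussErfc a c nhdsWithin_le_nhds hsign

lemma tendsto_gaussErfc_nhdsLT : Tendsto (gaussErfc a c) (𝓝[<] 0) (𝓝 (-1)) := by
  have hsign : ∀ᶠ w in 𝓝[<] (0 : ℝ), Real.sign w = -1 :=
    eventually_mem_nhdsWithin.mono fun w hw => Real.sign_of_neg hw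
  simpa using tendsto_gaussErfc a c nhdsWithin_le_nhds hsign

lemma fourier_gaussErfc_zero : 𝓕 (gaussErfc a c) 0 = 0 := by
  have hodd : ∫ w, gaussErfc a c w = -∫ w, gaussErfc a c w := by
    rw [← integral_neg, ← integral_neg_eq_self]
    simp only [gaussErfc_neg]
  simpa [fourier_eq_integral_cexp_smul] using self_eq_neg.mp hodd

lemma measurable_gaussErfc : Measurable (gaussErfc a c) := by
  have hsign : Measurable Real.sign :=
    .ite measurableSet_Iio measurable_const <|
      .ite measurableSet_Ioi measurable_const measurable_const
  have herfcC := (continuous_erfcC_mul_ofReal c).measurable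
  rw [funext (gaussErfc_eq a c)]
  fun_prop

variable {c}

lemma norm_gaussErfc_le (hc : 0 ≤ c) (w : ℝ) :
    ‖gaussErfc a c w‖ ≤ Real.exp (-(c ^ 2 - a.re) * w ^ 2) := by
  have hsign : ‖(Real.sign w : ℂ)‖ ≤ 1 := by
    rcases Real.sign_apply_eq w with h | h | h <;> simp [h]
  have herfc : ‖(erfc (c * |w|) : ℂ)‖ ≤ Real.exp (-((c * |w|) ^ 2)) := by
    rw [Complex.norm_of_nonneg (erfc_nonneg _)]
    exact erfc_le_exp_neg_sq (by positivity)
  have hexp : ‖Complex.exp (a * (w : ℂ) ^ 2)‖ = Real.exp (a.re * w ^ 2) := by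
    rw [Complex.norm_exp, ← Complex.ofReal_pow, Complex.re_mul_ofReal]
  calc ‖gaussErfc a c w‖
      ≤ Real.exp (a.re * w ^ 2) * 1 * Real.exp (-((c * |w|) ^ 2)) := by
        rw [gaussErfc, norm_mul, norm_mul, hexp]
        gcongr
    _ = Real.exp (-(c ^ 2 - a.re) * w ^ 2) := by
        rw [mul_one, ← Real.exp_add, mul_pow, sq_abs]
        ring_nf

variable {a}

lemma integrable_gaussErfc (hc : 0 ≤ c) (ha : a.re < c ^ 2) : Integrable (gaussErfc a c) :=
  (integrable_exp_neg_mul_sq (sub_pos.mpr ha)).mono' (measurable_gaussErfc a c).aestronglyMeasurable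
    (ae_of_all _ (norm_gaussErfc_le a hc))

lemma integrable_ofReal_mul_gaussErfc (hc : 0 ≤ c) (ha : a.re < c ^ 2) :
    Integrable fun w : ℝ => (w : ℂ) * gaussErfc a c w := by
  refine (integrable_mul_exp_neg_mul_sq (sub_pos.mpr ha)).norm.mono'
    (Complex.measurable_ofReal.mul (measurable_gaussErfc a c)).aestronglyMeasurable
    (ae_of_all _ fun w => ?_)
  rw [norm_mul, norm_mul, Complex.norm_real, Real.norm_of_nonneg (Real.exp_pos _).le]
  gcongr
  exact norm_gaussErfc_le a hc w

lemma fourier_ofReal_mul_gaussErfc (hc : 0 ≤ c) (ha : a.re < c ^ 2) (ha₀ : a ≠ 0) (x : ℝ) :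
    𝓕 (fun w : ℝ => (w : ℂ) * gaussErfc a c w) x = (π * I * x * 𝓕 (gaussErfc a c) x - 1 +
      c / √π * 𝓕 (fun w : ℝ => Complex.exp (-((c : ℂ) ^ 2 - a) * (w : ℂ) ^ 2)) x) / a := by
  set g : ℝ → ℂ := fun w => Complex.exp (-((c : ℂ) ^ 2 - a) * (w : ℂ) ^ 2)
  set h : ℝ → ℂ := fun w => (w : ℂ) * gaussErfc a c w
  have hg : Integrable g := integrable_cexp_neg_mul_sq <| by
    rw [Complex.sub_re, ← Complex.ofReal_pow, Complex.ofReal_re]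
    exact sub_pos.mpr ha
  have hh : Integrable h := integrable_ofReal_mul_gaussErfc hc ha
  have hderiv (w : ℝ) (hw : w ≠ 0) :
      HasDerivAt (gaussErfc a c) (((2 * a) • h + (-(2 * c / √π) : ℂ) • g) w) w := by
    refine (hasDerivAt_gaussErfc a c hw).congr_deriv ?_
    simp only [h, g, Pi.add_apply, Pi.smul_apply, smul_eq_mul]
    ring
  have hjump := fourier_of_hasDerivAt_of_jump (integrable_gaussErfc hc ha)
    ((hh.smul _).add (hg.smul _)) hderiv (tendsto_gaussErfc_nhdsLT a c)
    (tendsto_gaussErfc_nhdsGT a c) x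
  rw [fourier_add_of_integrable (hh.smul _) (hg.smul _), fourier_const_smul,
    fourier_const_smul] at hjump
  simp only [smul_eq_mul, Complex.ofReal_zero, mul_zero, Complex.exp_zero, one_mul] at hjump
  rw [eq_div_iff ha₀]
  linear_combination hjump / 2

lemma hasDerivAt_fourier_gaussErfc (hc : 0 ≤ c) (ha : a.re < c ^ 2) (ha₀ : a ≠ 0) (x : ℝ) :
    HasDerivAt (𝓕 (gaussErfc a c))
      (2 * π ^ 2 * x / a * 𝓕 (gaussErfc a c) x + 2 * π * I / a *
        (1 - c / √π * 𝓕 (fun w : ℝ => Complex.exp (-((c : ℂ) ^ 2 - a) * (w : ℂ) ^ 2)) x)) x := by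
  have hwf := integrable_ofReal_mul_gaussErfc hc ha
  have hfactor : (fun w : ℝ => (-2 * π * I * w : ℂ) • gaussErfc a c w) =
      (-2 * π * I : ℂ) • fun w : ℝ => (w : ℂ) * gaussErfc a c w := by
    ext w
    simp only [Pi.smul_apply, smul_eq_mul]
    ring
  refine (Real.hasDerivAt_fourier (integrable_gaussErfc hc ha)
    (by simpa only [Complex.real_smul] using hwf) x).congr_deriv ?_
  rw [hfactor, fourier_const_smul, fourier_ofReal_mul_gaussErfc hc ha ha₀, smul_eq_mul]
  linear_combination (-2 * π ^ 2 * x / a * 𝓕 (gaussErfc a c) x) * Complex.I_sq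

section IntegratingFactor

variable {s t : ℂ}

lemma hasDerivAt_cexp_mul_fourier_gaussErfc (hc : 0 ≤ c) (hs : s ≠ 0) (ht : 0 < t.re)
    (ht₂ : 0 < (t ^ 2).re) (hst : s ^ 2 + t ^ 2 = (c : ℂ) ^ 2) (x : ℝ) :
    HasDerivAt (fun x : ℝ => Complex.exp (-((π / s * x) ^ 2)) * 𝓕 (gaussErfc (s ^ 2) c) x)
      (2 * π * I / s ^ 2 * (Complex.exp (-((π / s * x) ^ 2)) -
        c / t * Complex.exp (-((π * c / (s * t) * x) ^ 2)))) x := by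
  have hsub : (c : ℂ) ^ 2 - s ^ 2 = t ^ 2 := by rw [← hst, add_sub_cancel_left]
  have ha : (s ^ 2).re < c ^ 2 := by
    rw [← sub_pos, ← Complex.ofReal_re (c ^ 2), ← Complex.sub_re, Complex.ofReal_pow, hsub]
    exact ht₂
  have ht₀ : t ≠ 0 := fun h => by simp [h] at ht
  have hexp : Complex.exp (-((π * c / (s * t) * x) ^ 2)) =
      Complex.exp (-((π / s * x) ^ 2)) * Complex.exp (-((π / t * x) ^ 2)) := by
    rw [← Complex.exp_add]
    congr 1
    field_simp
    rw [← hst]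
    ring
  have hfourier := hasDerivAt_fourier_gaussErfc hc ha (pow_ne_zero 2 hs) x
  rw [hsub, fourier_cexp_neg_sq_mul_sq ht ht₂] at hfourier
  refine ((hasDerivAt_cexp_neg_sq_mul_ofReal (π / s) x).mul hfourier).congr_deriv ?_
  have := ofReal_sqrt_pi_ne_zero
  rw [hexp]
  field_simp
  ring

lemma fourier_gaussErfc (hc : 0 ≤ c) (hs : s ≠ 0) (ht : 0 < t.re)
    (ht₂ : 0 < (t ^ 2).re) (hst : s ^ 2 + t ^ 2 = (c : ℂ) ^ 2) (x : ℝ) :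
    𝓕 (gaussErfc (s ^ 2) c) x = I * √π / s * Complex.exp ((π / s * x) ^ 2) *
      (erfcC (π * c / (s * t) * x) - erfcC (π / s * x)) := by
  have ht₀ : t ≠ 0 := fun h => by simp [h] at ht
  set D : ℝ → ℂ := fun x => Complex.exp (-((π / s * x) ^ 2)) * 𝓕 (gaussErfc (s ^ 2) c) x -
    I * √π / s * (erfcC (π * c / (s * t) * x) - erfcC (π / s * x)) with hD
  have hD' (x : ℝ) : HasDerivAt D 0 x := by
    have herfc := (hasDerivAt_erfcC_mul_ofReal (π * c / (s * t)) x).sub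
      (hasDerivAt_erfcC_mul_ofReal (π / s) x)
    refine ((hasDerivAt_cexp_mul_fourier_gaussErfc hc hs ht ht₂ hst x).sub
      (herfc.const_mul (I * √π / s))).congr_deriv ?_
    have := ofReal_sqrt_pi_ne_zero
    field_simp
    ring
  have hconst : D x = D 0 :=
    is_const_of_deriv_eq_zero (fun x => (hD' x).differentiableAt) (fun x => (hD' x).deriv) x 0
  have hD₀ : D 0 = 0 := by simp [hD, fourier_gaussErfc_zero]
  have hG := sub_eq_zero.mp (hconst.trans hD₀)
  refine mul_left_cancel₀ (Complex.exp_ne_zero _) (hG.trans ?_)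
  rw [Complex.exp_neg]
  field_simp

end IntegratingFactor

end GaussErfc

section Product

variable {f g : ℝ → ℂ}

lemma mul_mul_eC_eq_cexp_smul_mul_cexp_smul (f g : ℝ → ℂ) (x y w z : ℝ) :
    f w * g z * eC ((-(w * x) + z * y : ℝ) : ℂ) =
      Complex.exp (-2 * π * I * x * w) • f w *
        Complex.exp (-2 * π * I * (-y : ℝ) * z) • g z := by
  have hexp : eC ((-(w * x) + z * y : ℝ) : ℂ) =
      Complex.exp (-2 * π * I * x * w) * Complex.exp (-2 * π * I * (-y : ℝ) * z) := by
    rw [eC, ← Complex.exp_add]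
    push_cast
    ring_nf
  rw [hexp, smul_eq_mul, smul_eq_mul]
  ring

lemma integrable_prod_mul_eC (hf : Integrable f) (hg : Integrable g) (x y : ℝ) :
    Integrable fun p : ℝ × ℝ => f p.1 * g p.2 * eC ((-(p.1 * x) + p.2 * y : ℝ) : ℂ) := by
  simp only [mul_mul_eC_eq_cexp_smul_mul_cexp_smul]
  exact (integrable_cexp_smul hf x).mul_prod (integrable_cexp_smul hg (-y))

lemma integral_prod_mul_eC (f g : ℝ → ℂ) (x y : ℝ) :
    ∫ p : ℝ × ℝ, f p.1 * g p.2 * eC ((-(p.1 * x) + p.2 * y : ℝ) : ℂ) = 𝓕 f x * 𝓕⁻ g y := by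
  simp only [mul_mul_eC_eq_cexp_smul_mul_cexp_smul]
  rw [Measure.volume_eq_prod,
    integral_prod_mul (fun w : ℝ => Complex.exp (-2 * π * I * x * w) • f w)
    fun z : ℝ => Complex.exp (-2 * π * I * (-y : ℝ) * z) • g z,
    ← fourier_eq_integral_cexp_smul, ← fourier_eq_integral_cexp_smul,
    Real.fourierInv_eq_fourier_neg]

end Product

lemma phiStar_eq_gaussErfc_mul_cexp (σ : ℂ) (w z : ℝ) :
    phiStar σ w z = gaussErfc (-(π * I * σ)) √(2 * π * σ.im) w *
      Complex.exp (-(-(π * I * σ)) * (z : ℂ) ^ 2) := by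
  have hexp : eC ((((z : ℂ) ^ 2 - (w : ℂ) ^ 2) / 2) * σ) =
      Complex.exp (-(π * I * σ) * (w : ℂ) ^ 2) * Complex.exp (-(-(π * I * σ)) * (z : ℂ) ^ 2) := by
    rw [eC, ← Complex.exp_add]
    ring_nf
  rw [phiStar, gaussErfc, hexp]
  ring

lemma re_neg_pi_mul_I_mul (σ : ℂ) : (-(π * I * σ)).re = π * σ.im := by simp

lemma integrable_phiStar_mul_eC {σ : ℂ} (hσ : 0 < σ.im) (x y : ℝ) :
    Integrable fun p : ℝ × ℝ => phiStar σ p.1 p.2 * eC ((-(p.1 * x) + p.2 * y : ℝ) : ℂ) := by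
  have hpos : 0 < π * σ.im := mul_pos Real.pi_pos hσ
  simp only [phiStar_eq_gaussErfc_mul_cexp]
  refine integrable_prod_mul_eC (integrable_gaussErfc (Real.sqrt_nonneg _) ?_)
    (g := fun z : ℝ => Complex.exp (-(-(π * I * σ)) * (z : ℂ) ^ 2))
    (integrable_cexp_neg_mul_sq ?_) x y
  · rw [re_neg_pi_mul_I_mul, Real.sq_sqrt (by linarith)]
    linarith
  · rwa [re_neg_pi_mul_I_mul]

section Inversion

variable {τ p : ℂ}

lemma im_neg_one_div (τ : ℂ) : (-1 / τ).im = τ.im / ‖τ‖ ^ 2 := by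
  simp [Complex.normSq_eq_norm_sq, neg_div]

lemma im_neg_one_div_pos (hτ : 0 < τ.im) : 0 < (-1 / τ).im := by
  have hτ₀ : τ ≠ 0 := fun h => by simp [h] at hτ
  have := norm_pos_iff.mpr hτ₀
  rw [im_neg_one_div]
  positivity

lemma mul_conj_eq_of_sq_eq (hpτ : p ^ 2 = -I * π * τ) : p * conj p = π * ‖τ‖ := by
  have hnorm := congrArg norm hpτ
  rw [norm_pow, norm_mul, norm_mul, norm_neg, Complex.norm_I, one_mul, Complex.norm_real,
    Real.norm_of_nonneg Real.pi_pos.le] at hnorm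
  rw [Complex.mul_conj, Complex.normSq_eq_norm_sq, hnorm]
  push_cast
  rfl

lemma sq_pi_div_eq_of_sq_eq (hpτ : p ^ 2 = -I * π * τ) : (π / p) ^ 2 = -(π * I * (-1 / τ)) := by
  have hI : (-I)⁻¹ = I := by rw [inv_neg, Complex.inv_I, neg_neg]
  have hπ : (π : ℂ) ≠ 0 := Complex.ofReal_ne_zero.mpr Real.pi_ne_zero
  rw [div_pow, hpτ, div_eq_mul_inv, mul_inv, mul_inv, hI]
  field_simp

lemma sqrt_pi_div_pi_div (p : ℂ) : √π / (π / p) = p / √π := by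
  have := ofReal_sqrt_pi_ne_zero
  rw [← ofReal_sqrt_pi_sq]
  field_simp

lemma norm_mul_sqrt_im_neg_one_div (hτ : 0 < τ.im) :
    ‖τ‖ * √(2 * π * (-1 / τ).im) = √(2 * π * τ.im) := by
  have hτ₀ : ‖τ‖ ≠ 0 := norm_ne_zero_iff.mpr fun h => by simp [h] at hτ
  rw [im_neg_one_div, ← mul_div_assoc, Real.sqrt_div' _ (sq_nonneg _),
    Real.sqrt_sq (norm_nonneg τ), mul_div_cancel₀ _ hτ₀]

lemma fourier_gaussErfc_neg_one_div (hτ : 0 < τ.im) (hp : 0 < p.re) (hpτ : p ^ 2 = -I * π * τ)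
    (x : ℝ) :
    𝓕 (gaussErfc (-(π * I * (-1 / τ))) √(2 * π * (-1 / τ).im)) x =
      I * p / √π * Complex.exp ((p * x) ^ 2) *
        (erfcC (√(2 * π * τ.im) * x) - erfcC (p * x)) := by
  have hp₀ : p ≠ 0 := fun h => by simp [h] at hp
  have hπ : (π : ℂ) ≠ 0 := Complex.ofReal_ne_zero.mpr Real.pi_ne_zero
  have hs₂ : (π / p) ^ 2 = -(π * I * (-1 / τ)) := sq_pi_div_eq_of_sq_eq hpτ
  have hre : ((π / p : ℂ) ^ 2).re = π * (-1 / τ).im := by rw [hs₂, re_neg_pi_mul_I_mul]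
  have hpos : 0 < π * (-1 / τ).im := mul_pos Real.pi_pos (im_neg_one_div_pos hτ)
  have hsum : (π / p : ℂ) ^ 2 + conj (π / p : ℂ) ^ 2 = (√(2 * π * (-1 / τ).im) : ℂ) ^ 2 := by
    rw [← map_pow, Complex.add_conj, hre, ← Complex.ofReal_pow, Real.sq_sqrt (by linarith),
      mul_assoc]
  have hfourier := fourier_gaussErfc (Real.sqrt_nonneg _) (div_ne_zero hπ hp₀)
    (t := conj (π / p : ℂ)) (by rw [Complex.conj_re]; exact re_ofReal_div_pos Real.pi_pos hp)
    (by rwa [← map_pow, Complex.conj_re, hre]) hsum x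
  have hscale : π * √(2 * π * (-1 / τ).im) / (π / p * conj (π / p : ℂ)) =
      (√(2 * π * τ.im) : ℂ) := by
    rw [← norm_mul_sqrt_im_neg_one_div hτ, Complex.ofReal_mul, map_div₀, Complex.conj_ofReal,
      div_mul_div_comm, mul_conj_eq_of_sq_eq hpτ]
    field_simp
  rwa [hs₂, hscale, mul_div_assoc I (√π : ℂ), sqrt_pi_div_pi_div, ← mul_div_assoc I p,
    div_div_cancel₀ hπ] at hfourier

lemma fourierInv_gaussian_neg_one_div (hτ : 0 < τ.im) (hp : 0 < p.re) (hpτ : p ^ 2 = -I * π * τ)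
    (y : ℝ) :
    𝓕⁻ (fun z : ℝ => Complex.exp (-(-(π * I * (-1 / τ))) * (z : ℂ) ^ 2)) y =
      p / √π * Complex.exp (-((p * y) ^ 2)) := by
  have hπ : (π : ℂ) ≠ 0 := Complex.ofReal_ne_zero.mpr Real.pi_ne_zero
  have hs₂ : (π / p) ^ 2 = -(π * I * (-1 / τ)) := sq_pi_div_eq_of_sq_eq hpτ
  have hre : 0 < ((π / p : ℂ) ^ 2).re := by
    rw [hs₂, re_neg_pi_mul_I_mul]
    exact mul_pos Real.pi_pos (im_neg_one_div_pos hτ)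
  rw [← hs₂, Real.fourierInv_eq_fourier_neg,
    fourier_cexp_neg_sq_mul_sq (re_ofReal_div_pos Real.pi_pos hp) hre, div_div_cancel₀ hπ,
    sqrt_pi_div_pi_div, Complex.ofReal_neg, mul_neg, neg_sq]

lemma integral_phiStar_neg_one_div_mul_eC (hτ : 0 < τ.im) (hp : 0 < p.re)
    (hpτ : p ^ 2 = -I * π * τ) (x y : ℝ) :
    ∫ q : ℝ × ℝ, phiStar (-1 / τ) q.1 q.2 * eC ((-(q.1 * x) + q.2 * y : ℝ) : ℂ) =
      τ * (eC ((((y : ℂ) ^ 2 - (x : ℂ) ^ 2) / 2) * τ) * (Real.sign x : ℂ) *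
        (erfc (√(2 * π * τ.im) * |x|) - erfcC (p * (|x| : ℝ)))) := by
  have hcoeff : I * p / √π * (p / √π) = τ := by
    have hπ : (π : ℂ) ≠ 0 := Complex.ofReal_ne_zero.mpr Real.pi_ne_zero
    rw [div_mul_div_comm, ← sq, ofReal_sqrt_pi_sq, mul_assoc, ← sq, hpτ, div_eq_iff hπ]
    linear_combination (-π * τ) * Complex.I_sq
  have hexp : Complex.exp ((p * x) ^ 2) * Complex.exp (-((p * y) ^ 2)) =
      eC ((((y : ℂ) ^ 2 - (x : ℂ) ^ 2) / 2) * τ) := by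
    rw [eC, ← Complex.exp_add, mul_pow, mul_pow, hpτ]
    ring_nf
  have herfc : erfcC (√(2 * π * τ.im) * x) - erfcC (p * x) =
      Real.sign x * (erfc (√(2 * π * τ.im) * |x|) - erfcC (p * (|x| : ℝ))) := by
    rw [← erfcC_ofReal, Complex.ofReal_mul]
    linear_combination sign_mul_one_sub_erfcC_mul_abs √(2 * π * τ.im) x -
      sign_mul_one_sub_erfcC_mul_abs p x
  simp only [phiStar_eq_gaussErfc_mul_cexp]
  rw [integral_prod_mul_eC _ fun z : ℝ => Complex.exp (-(-(π * I * (-1 / τ))) * (z : ℂ) ^ 2),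
    fourier_gaussErfc_neg_one_div hτ hp hpτ, fourierInv_gaussian_neg_one_div hτ hp hpτ, herfc,
    ← hexp]
  linear_combination Complex.exp ((p * x) ^ 2) * Complex.exp (-((p * y) ^ 2)) *
    (Real.sign x * (erfc (√(2 * π * τ.im) * |x|) - erfcC (p * (|x| : ℝ)))) * hcoeff

end Inversion

lemma csqrt_sq (z : ℂ) : csqrt z ^ 2 = z := by
  rw [csqrt, one_div]
  exact Complex.cpow_ofNat_inv_pow z 2

lemma re_csqrt_pos {z : ℂ} (hz : 0 < z.re) : 0 < (csqrt z).re := by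
  rw [csqrt, one_div, Complex.cpow_inv_two_re]
  positivity

/-- the Fourier transform of `φ*_{-1/τ}` converges absolutely, and
`φ*_τ(x,y) - τ⁻¹·F(φ*_{-1/τ})(x,y) = e(((y²-x²)/2)τ)·sgn(x)·erfc(√(-iπτ)|x|)`. -/
theorem stmt2 (τ : ℂ) (hτ : 0 < τ.im) :
    (∀ x y : ℝ, Integrable (fun p : ℝ × ℝ =>
      phiStar (-1 / τ) p.1 p.2 * eC ((-(p.1 * x) + p.2 * y : ℝ) : ℂ))) ∧
    (∀ x y : ℝ, x ≠ 0 →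
      phiStar τ x y -
          τ⁻¹ * ∫ p : ℝ × ℝ, phiStar (-1 / τ) p.1 p.2 * eC ((-(p.1 * x) + p.2 * y : ℝ) : ℂ) =
        eC ((((y : ℂ) ^ 2 - (x : ℂ) ^ 2) / 2) * τ) * (Real.sign x : ℂ) *
          erfcC (csqrt (-Complex.I * (Real.pi : ℂ) * τ) * (|x| : ℝ))) := by
  refine ⟨integrable_phiStar_mul_eC (im_neg_one_div_pos hτ), fun x y _ => ?_⟩
  have hτ₀ : τ ≠ 0 := fun h => by simp [h] at hτ
  have hre : 0 < (-I * π * τ).re := by simpa using mul_pos Real.pi_pos hτ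
  rw [integral_phiStar_neg_one_div_mul_eC hτ (re_csqrt_pos hre) (csqrt_sq _), phiStar,
    inv_mul_cancel_left₀ hτ₀]
  ring

end
end

section
/- Let τ ∈ H. For every (x,y) ∈ ℝ² with x² ≠ y², the regularized Fourier transform F(φ⁺_τ)(x,y) := lim_{T'→∞} ∫_{−T'}^{T'} ( lim_{T→∞} ∫_{−T}^{T} φ⁺_τ((a−b)/√2, (a+b)/√2)·e( −((a−b)/√2)·x + ((a+b)/√2)·y ) db ) da exists (both the inner and outer limits exist), and moreover sup{ |F(φ⁺_τ)(x,y)| : (x,y) ∈ ℝ², x² ≠ y² } < ∞. -/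
open MeasureTheory Filter Set intervalIntegral

noncomputable section

/-- `φ⁺_τ(x,y) = e(((y²-x²)/2)τ)·sgn(x)·1_{y²>x²}`. -/
def phiPlus (τ : ℂ) (x y : ℝ) : ℂ :=
  eC ((((y : ℂ) ^ 2 - (x : ℂ) ^ 2) / 2) * τ) * (Real.sign x : ℂ) *
    (if x ^ 2 < y ^ 2 then 1 else 0)

/-- The rotated integrand of the regularized Fourier transform of `φ⁺_τ`. -/
def ftPlusIntegrand (τ : ℂ) (x y a b : ℝ) : ℂ :=
  phiPlus τ ((a - b) / Real.sqrt 2) ((a + b) / Real.sqrt 2) *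
    eC ((-(((a - b) / Real.sqrt 2) * x) + ((a + b) / Real.sqrt 2) * y : ℝ) : ℂ)

/-!
In the rotated coordinates the cone `y² > x²` is the set `ab > 0`. Integrating out `b` gives, with
`q = (x + y)/√2` and `p = (y - x)/√2`,
`(2πi)⁻¹ (2 e(a√2y) e(a²τ)/(aτ + q) - e(ap)/(aτ + q))`, for both signs of `a`. When `h` is even and
both `h(a)` and `a dh/da` are bounded, `h(a)/(aτ + q)` is a Calderón–Zygmund kernel with constants
uniform in `q`: its sum with its reflection is `2q h(a)/(q² - a²τ²)`, whose integral is bounded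
independently of `q`. The truncated Fourier integrals at frequency `r` of such a kernel are bounded
uniformly in `r`: on `|a| ≤ 1/|r|` the exponential is close to `1` and the cancellation applies,
while on `|a| ≥ 1/|r|` one integrates by parts.
-/

lemma norm_eC (z : ℂ) : ‖eC z‖ = Real.exp (-(2 * Real.pi * z.im)) := by
  rw [eC, Complex.norm_exp]
  simp

lemma norm_eC_ofReal (r : ℝ) : ‖eC r‖ = 1 := by
  simp [norm_eC]

lemma eC_add (z w : ℂ) : eC (z + w) = eC z * eC w := by
  rw [eC, eC, eC, mul_add, Complex.exp_add]

lemma norm_eC_ofReal_sub_one_le (r : ℝ) : ‖eC r - 1‖ ≤ 2 * Real.pi * |r| := by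
  have h : eC r = Complex.exp (Complex.I * (2 * Real.pi * r : ℝ)) := by
    rw [eC]
    push_cast
    ring_nf
  rw [h]
  refine Real.norm_exp_I_mul_ofReal_sub_one_le.trans_eq ?_
  rw [Real.norm_eq_abs, abs_mul, abs_of_pos Real.two_pi_pos]

lemma contDiff_eC {n : WithTop ℕ∞} : ContDiff ℝ n eC := by
  unfold eC
  fun_prop

@[fun_prop]
lemma continuous_eC : Continuous eC :=
  contDiff_eC (n := 0).continuous

lemma hasDerivAt_eC_comp {f : ℝ → ℂ} {f' : ℂ} {a : ℝ} (hf : HasDerivAt f f' a) :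
    HasDerivAt (fun a ↦ eC (f a)) (eC (f a) * (2 * Real.pi * Complex.I * f')) a :=
  (hf.const_mul _).cexp

/-- A Calderón–Zygmund kernel on the line, smoothed at the origin, with size constant `A`,
smoothness constant `B` and cancellation constant `W`. -/
structure IsCalderonZygmundKernel (K : ℝ → ℂ) (A B W : ℝ) : Prop where
  contDiff : ContDiff ℝ 1 K
  abs_mul_norm_le : ∀ a, |a| * ‖K a‖ ≤ A
  sq_mul_norm_deriv_le : ∀ a, a ^ 2 * ‖deriv K a‖ ≤ B
  norm_integral_le : ∀ R, 0 ≤ R → ‖∫ a in (-R)..R, K a‖ ≤ W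

lemma integral_inv_sq {S T : ℝ} (hS : 0 < S) (hST : S ≤ T) :
    ∫ a in S..T, (a ^ 2)⁻¹ = S⁻¹ - T⁻¹ := by
  have h := integral_zpow (a := S) (b := T) (n := -2)
    (.inr ⟨by norm_num, by simp [uIcc_of_le hST, hS]⟩)
  have hexp : (-2 + 1 : ℤ) = -1 := by norm_num
  have hden : ((-2 : ℤ) : ℝ) + 1 = -1 := by norm_num
  rw [hexp, hden, zpow_neg_one, zpow_neg_one, div_neg, div_one, neg_sub] at h
  simpa only [zpow_neg, zpow_ofNat] using h

lemma integral_eC_mul {K : ℝ → ℂ} (hK : ContDiff ℝ 1 K) {r : ℝ} (hr : r ≠ 0) (S T : ℝ) :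
    ∫ a in S..T, eC (a * r : ℝ) * K a =
      (eC (T * r : ℝ) * K T - eC (S * r : ℝ) * K S - ∫ a in S..T, eC (a * r : ℝ) * deriv K a) /
        (2 * Real.pi * Complex.I * r) := by
  set c : ℂ := 2 * Real.pi * Complex.I * r
  have hc : c ≠ 0 := by simp [c, hr, Real.pi_ne_zero]
  have he (a : ℝ) : HasDerivAt (fun a : ℝ ↦ eC (a * r : ℝ)) (eC (a * r : ℝ) * c) a := by
    have := hasDerivAt_eC_comp ((hasDerivAt_id a).mul_const r).ofReal_comp
    simpa [c] using this
  have hdK := hK.continuous_deriv le_rfl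
  have hparts := integral_deriv_mul_eq_sub (a := S) (b := T) (fun a _ ↦ he a)
    (fun a _ ↦ (hK.differentiable one_ne_zero a).hasDerivAt)
    (Continuous.intervalIntegrable (by fun_prop) _ _) (hdK.intervalIntegrable _ _)
  rw [integral_add (Continuous.intervalIntegrable (by fun_prop) _ _)
    (Continuous.intervalIntegrable (by fun_prop) _ _)] at hparts
  rw [eq_div_iff hc, ← hparts, ← intervalIntegral.integral_mul_const]
  simp only [add_sub_cancel_right, mul_right_comm]

namespace IsCalderonZygmundKernel

variable {K : ℝ → ℂ} {A B W : ℝ}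

lemma size_nonneg (hK : IsCalderonZygmundKernel K A B W) : 0 ≤ A := by
  simpa using hK.abs_mul_norm_le 0

lemma smoothness_nonneg (hK : IsCalderonZygmundKernel K A B W) : 0 ≤ B := by
  simpa using hK.sq_mul_norm_deriv_le 0

lemma comp_neg (hK : IsCalderonZygmundKernel K A B W) :
    IsCalderonZygmundKernel (fun a ↦ K (-a)) A B W where
  contDiff := hK.contDiff.comp contDiff_neg
  abs_mul_norm_le a := by simpa using hK.abs_mul_norm_le (-a)
  sq_mul_norm_deriv_le a := by
    simpa [deriv_comp_neg] using hK.sq_mul_norm_deriv_le (-a)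
  norm_integral_le R hR := by
    simpa [intervalIntegral.integral_comp_neg] using hK.norm_integral_le R hR

lemma norm_le_div (hK : IsCalderonZygmundKernel K A B W) {a : ℝ} (ha : 0 < a) :
    ‖K a‖ ≤ A / a := by
  rw [le_div_iff₀' ha]
  simpa [abs_of_pos ha] using hK.abs_mul_norm_le a

lemma norm_deriv_le_div (hK : IsCalderonZygmundKernel K A B W) {a : ℝ} (ha : a ≠ 0) :
    ‖deriv K a‖ ≤ B / a ^ 2 := by
  rw [le_div_iff₀' (by positivity)]
  exact hK.sq_mul_norm_deriv_le a

lemma intervalIntegrable_eC_mul (hK : IsCalderonZygmundKernel K A B W) (r S T : ℝ) :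
    IntervalIntegrable (fun a ↦ eC (a * r : ℝ) * K a) volume S T := by
  have := hK.contDiff.continuous
  exact Continuous.intervalIntegrable (by fun_prop) _ _

lemma norm_integral_eC_mul_deriv_le (hK : IsCalderonZygmundKernel K A B W) (r : ℝ) {S T : ℝ}
    (hS : 0 < S) (hST : S ≤ T) :
    ‖∫ a in S..T, eC (a * r : ℝ) * deriv K a‖ ≤ B * (S⁻¹ - T⁻¹) := by
  have hint : IntervalIntegrable (fun a : ℝ ↦ B * (a ^ 2)⁻¹) volume S T := by
    refine (ContinuousOn.inv₀ (by fun_prop) fun a ha ↦ ?_).intervalIntegrable.const_mul B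
    rw [uIcc_of_le hST] at ha
    have := hS.trans_le ha.1
    positivity
  calc ‖∫ a in S..T, eC (a * r : ℝ) * deriv K a‖
      ≤ ∫ a in S..T, B * (a ^ 2)⁻¹ := by
        refine norm_integral_le_of_norm_le hST (ae_of_all _ fun a ha ↦ ?_) hint
        rw [norm_mul, norm_eC_ofReal, one_mul, ← div_eq_mul_inv]
        exact hK.norm_deriv_le_div (hS.trans ha.1).ne'
    _ = B * (S⁻¹ - T⁻¹) := by rw [intervalIntegral.integral_const_mul, integral_inv_sq hS hST]

lemma norm_integral_eC_mul_tail_le (hK : IsCalderonZygmundKernel K A B W) {r S T : ℝ}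
    (hr : r ≠ 0) (hS : 0 < S) (hST : S ≤ T) :
    ‖∫ a in S..T, eC (a * r : ℝ) * K a‖ ≤ (2 * A + B) / (2 * Real.pi * |r| * S) := by
  have hA : 0 ≤ A := hK.size_nonneg
  have hB : 0 ≤ B := hK.smoothness_nonneg
  have hT : 0 < T := hS.trans_le hST
  have hend : ‖eC (T * r : ℝ) * K T - eC (S * r : ℝ) * K S‖ ≤ A / S + A / S := by
    refine (norm_sub_le _ _).trans ?_
    simp only [norm_mul, norm_eC_ofReal, one_mul]
    gcongr
    · exact (hK.norm_le_div hT).trans (by gcongr)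
    · exact hK.norm_le_div hS
  have hderiv : ‖∫ a in S..T, eC (a * r : ℝ) * deriv K a‖ ≤ B / S := by
    refine (hK.norm_integral_eC_mul_deriv_le r hS hST).trans ?_
    rw [div_eq_mul_inv]
    gcongr
    exact sub_le_self _ (by positivity)
  have hnorm : ‖(2 * Real.pi * Complex.I * r : ℂ)‖ = 2 * Real.pi * |r| := by
    simp [abs_of_pos Real.pi_pos]
  rw [integral_eC_mul hK.contDiff hr, norm_div, hnorm]
  calc _ ≤ (A / S + A / S + B / S) / (2 * Real.pi * |r|) := by
        gcongr
        exact (norm_sub_le _ _).trans (add_le_add hend hderiv)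
    _ = _ := by field_simp; ring

lemma norm_integral_eC_mul_head_le (hK : IsCalderonZygmundKernel K A B W) (r : ℝ) {R : ℝ}
    (hR : 0 ≤ R) :
    ‖∫ a in (-R)..R, eC (a * r : ℝ) * K a‖ ≤ 4 * Real.pi * A * (|r| * R) + W := by
  have hcont := hK.contDiff.continuous
  have hosc : ‖∫ a in (-R)..R, (eC (a * r : ℝ) - 1) * K a‖ ≤
      2 * Real.pi * |r| * A * |R - (-R)| := by
    refine norm_integral_le_of_norm_le_const fun a _ ↦ ?_
    calc ‖(eC (a * r : ℝ) - 1) * K a‖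
        ≤ 2 * Real.pi * |a * r| * ‖K a‖ := by
          rw [norm_mul]
          gcongr
          exact norm_eC_ofReal_sub_one_le _
      _ = 2 * Real.pi * |r| * (|a| * ‖K a‖) := by rw [abs_mul]; ring
      _ ≤ 2 * Real.pi * |r| * A := by gcongr; exact hK.abs_mul_norm_le a
  have hsplit : ∫ a in (-R)..R, eC (a * r : ℝ) * K a =
      (∫ a in (-R)..R, (eC (a * r : ℝ) - 1) * K a) + ∫ a in (-R)..R, K a := by
    rw [← integral_add (Continuous.intervalIntegrable (by fun_prop) _ _)
      (hcont.intervalIntegrable _ _)]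
    simp only [sub_mul, one_mul, sub_add_cancel]
  rw [hsplit]
  refine (norm_add_le_of_le hosc (hK.norm_integral_le R hR)).trans_eq ?_
  rw [sub_neg_eq_add, abs_of_nonneg (add_nonneg hR hR)]
  ring

theorem norm_integral_eC_mul_le (hK : IsCalderonZygmundKernel K A B W) (r : ℝ) {R : ℝ}
    (hR : 0 ≤ R) :
    ‖∫ a in (-R)..R, eC (a * r : ℝ) * K a‖ ≤
      4 * Real.pi * A + W + (2 * A + B) / Real.pi := by
  have hA : 0 ≤ A := hK.size_nonneg
  have hB : 0 ≤ B := hK.smoothness_nonneg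
  rcases le_or_gt (|r| * R) 1 with hrR | hrR
  · calc _ ≤ 4 * Real.pi * A * (|r| * R) + W := hK.norm_integral_eC_mul_head_le r hR
      _ ≤ 4 * Real.pi * A * 1 + W := by gcongr
      _ ≤ _ := by rw [mul_one]; exact le_add_of_nonneg_right (by positivity)
  · have hr : r ≠ 0 := by
      rintro rfl
      norm_num at hrR
    set S := |r|⁻¹
    have hSpos : 0 < S := by positivity
    have hrS : |r| * S = 1 := mul_inv_cancel₀ (abs_ne_zero.2 hr)
    have hSR : S ≤ R := (inv_le_iff_one_le_mul₀' (abs_pos.2 hr)).2 hrR.le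
    have hhead := hK.norm_integral_eC_mul_head_le r hSpos.le
    have hright := hK.norm_integral_eC_mul_tail_le hr hSpos hSR
    have hleft : ‖∫ a in (-R)..(-S), eC (a * r : ℝ) * K a‖ ≤
        (2 * A + B) / (2 * Real.pi * |r| * S) := by
      have := hK.comp_neg.norm_integral_eC_mul_tail_le (neg_ne_zero.2 hr) hSpos hSR
      rw [← intervalIntegral.integral_comp_neg]
      simpa using this
    rw [mul_assoc _ |r|, hrS] at hright hleft
    rw [hrS] at hhead
    rw [← integral_add_adjacent_intervals (hK.intervalIntegrable_eC_mul r (-R) S)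
      (hK.intervalIntegrable_eC_mul r S R),
      ← integral_add_adjacent_intervals (hK.intervalIntegrable_eC_mul r (-R) (-S))
      (hK.intervalIntegrable_eC_mul r (-S) S)]
    refine (norm_add_le_of_le (norm_add_le_of_le hleft hhead) hright).trans_eq ?_
    field_simp
    ring

lemma norm_le_of_tendsto (hK : IsCalderonZygmundKernel K A B W) {r : ℝ} {L : ℂ}
    (hL : Tendsto (fun T ↦ ∫ a in (-T)..T, eC (a * r : ℝ) * K a) atTop (nhds L)) :
    ‖L‖ ≤ 4 * Real.pi * A + W + (2 * A + B) / Real.pi := by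
  refine le_of_tendsto hL.norm ?_
  filter_upwards [eventually_ge_atTop 0] with T hT using hK.norm_integral_eC_mul_le r hT

lemma integrable_deriv (hK : IsCalderonZygmundKernel K A B W) : Integrable (deriv K) := by
  refine (hK.contDiff.continuous_deriv le_rfl).locallyIntegrable.integrable_of_isBigO_cocompact
    (g := fun a ↦ (1 + a ^ 2)⁻¹) (.of_bound (2 * B) ?_)
    (integrable_inv_one_add_sq.integrableAtFilter _)
  filter_upwards [tendsto_norm_cocompact_atTop.eventually_ge_atTop 1] with a ha
  have hsq : 1 ≤ a ^ 2 := (one_le_sq_iff_one_le_abs a).2 ha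
  rw [Real.norm_of_nonneg (by positivity), ← div_eq_mul_inv, le_div_iff₀ (by positivity)]
  nlinarith [hK.sq_mul_norm_deriv_le a, norm_nonneg (deriv K a)]

lemma tendsto_atTop (hK : IsCalderonZygmundKernel K A B W) : Tendsto K atTop (nhds 0) := by
  refine squeeze_zero_norm' ?_ (tendsto_const_nhds (x := A).div_atTop tendsto_id)
  filter_upwards [eventually_gt_atTop 0] with a ha using hK.norm_le_div ha

theorem exists_tendsto_integral_eC_mul (hK : IsCalderonZygmundKernel K A B W) {r : ℝ}
    (hr : r ≠ 0) :
    ∃ L, Tendsto (fun T ↦ ∫ a in (-T)..T, eC (a * r : ℝ) * K a) atTop (nhds L) := by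
  have hend {f : ℝ → ℝ} {g : ℝ → ℂ} (hg : Tendsto g atTop (nhds 0)) :
      Tendsto (fun T ↦ eC (f T * r : ℝ) * g T) atTop (nhds 0) := by
    rw [tendsto_zero_iff_norm_tendsto_zero] at hg ⊢
    simpa only [norm_mul, norm_eC_ofReal, one_mul] using hg
  have hint : Integrable fun a ↦ eC (a * r : ℝ) * deriv K a :=
    hK.integrable_deriv.bdd_mul (c := 1) (Continuous.aestronglyMeasurable (by fun_prop))
      (ae_of_all _ fun a ↦ (norm_eC_ofReal _).le)
  have hlim := intervalIntegral_tendsto_integral hint tendsto_neg_atTop_atBot tendsto_id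
  simp only [integral_eC_mul hK.contDiff hr]
  exact ⟨_, (((hend hK.tendsto_atTop).sub (hend hK.comp_neg.tendsto_atTop)).sub hlim).div_const _⟩

end IsCalderonZygmundKernel

/-- A constant comparing the norm of `a * τ + q` with `|a| + |q|`, for real `a` and `q`. -/
def poleConst (τ : ℂ) : ℝ := 1 + (1 + ‖τ‖) / |τ.im|

/-- The kernel `h(a) / (aτ + q)`. Integrating out one variable of the rotated transform leaves a
combination of Fourier integrals of such kernels, with `h(a) = 1` and `h(a) = e(a²τ)`. -/
def poleKernel (τ : ℂ) (h : ℝ → ℂ) (q a : ℝ) : ℂ := h a / (a * τ + q)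

section PoleKernel

variable {τ : ℂ} {h : ℝ → ℂ} {H M q : ℝ}

lemma poleConst_nonneg (τ : ℂ) : 0 ≤ poleConst τ := by
  unfold poleConst
  positivity

lemma abs_add_abs_le_poleConst_mul (hτ : τ.im ≠ 0) (a q : ℝ) :
    |a| + |q| ≤ poleConst τ * ‖a * τ + q‖ := by
  have him : |a| * |τ.im| ≤ ‖a * τ + q‖ := by
    simpa [abs_mul] using Complex.abs_im_le_norm (a * τ + q)
  have hre : |q| ≤ ‖a * τ + q‖ + |a| * ‖τ‖ := by
    simpa using norm_sub_le (a * τ + q) (a * τ)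
  have ha : |a| ≤ ‖a * τ + q‖ / |τ.im| := (le_div_iff₀ (abs_pos.2 hτ)).2 him
  calc |a| + |q| ≤ ‖a * τ + q‖ + (1 + ‖τ‖) * |a| := by linarith
    _ ≤ ‖a * τ + q‖ + (1 + ‖τ‖) * (‖a * τ + q‖ / |τ.im|) := by gcongr
    _ = poleConst τ * ‖a * τ + q‖ := by unfold poleConst; ring

lemma mul_add_ofReal_ne_zero (hτ : τ.im ≠ 0) {a q : ℝ} (haq : a ≠ 0 ∨ q ≠ 0) :
    (a * τ + q : ℂ) ≠ 0 := by
  intro hzero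
  have hle := abs_add_abs_le_poleConst_mul hτ a q
  rw [hzero, norm_zero, mul_zero] at hle
  rcases haq with ha | hq
  · linarith [abs_pos.2 ha, abs_nonneg q]
  · linarith [abs_nonneg a, abs_pos.2 hq]

lemma abs_mul_norm_inv_le (hτ : τ.im ≠ 0) (hq : q ≠ 0) (a : ℝ) :
    |a| * ‖(a * τ + q : ℂ)⁻¹‖ ≤ poleConst τ := by
  have hpos := norm_pos_iff.2 (mul_add_ofReal_ne_zero hτ (a := a) (.inr hq))
  rw [norm_inv, ← div_eq_mul_inv, div_le_iff₀ hpos]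
  linarith [abs_add_abs_le_poleConst_mul hτ a q, abs_nonneg q]

lemma norm_inv_mul_inv_le (hτ : τ.im ≠ 0) (hq : q ≠ 0) (a : ℝ) :
    ‖(a * τ + q : ℂ)⁻¹ * (q - a * τ)⁻¹‖ ≤ poleConst τ ^ 2 / (a ^ 2 + q ^ 2) := by
  have hconst := poleConst_nonneg τ
  have hplus := abs_add_abs_le_poleConst_mul hτ a q
  have hminus := abs_add_abs_le_poleConst_mul hτ (-a) q
  have hpos := norm_pos_iff.2 (mul_add_ofReal_ne_zero hτ (a := a) (.inr hq))
  have hneg := norm_pos_iff.2 (mul_add_ofReal_ne_zero hτ (a := -a) (.inr hq))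
  rw [abs_neg] at hminus
  rw [Complex.ofReal_neg, neg_mul, neg_add_eq_sub] at hminus hneg
  rw [norm_mul, norm_inv, norm_inv, ← mul_inv, ← one_div,
    div_le_div_iff₀ (by positivity) (by positivity), one_mul]
  calc a ^ 2 + q ^ 2 ≤ (|a| + |q|) * (|a| + |q|) := by
        nlinarith [sq_abs a, sq_abs q, mul_nonneg (abs_nonneg a) (abs_nonneg q)]
    _ ≤ (poleConst τ * ‖a * τ + q‖) * (poleConst τ * ‖q - a * τ‖) := by gcongr
    _ = _ := by ring

lemma integral_abs_div_sq_add_sq_le (hq : q ≠ 0) (S T : ℝ) :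
    ∫ a in S..T, |q| / (a ^ 2 + q ^ 2) ≤ Real.pi := by
  have hrescale : ∫ a in S..T, |q| / (a ^ 2 + q ^ 2) =
      Real.arctan (T / |q|) - Real.arctan (S / |q|) := by
    rw [← integral_inv_one_add_sq, ← inv_mul_integral_comp_div,
      ← intervalIntegral.integral_const_mul]
    refine integral_congr fun a _ ↦ ?_
    simp only [← sq_abs q]
    have := abs_pos.2 hq
    field_simp
    ring
  rw [hrescale]
  linarith [Real.arctan_lt_pi_div_two (T / |q|), Real.neg_pi_div_two_lt_arctan (S / |q|)]

lemma contDiff_poleKernel (hτ : τ.im ≠ 0) (hh : ContDiff ℝ 1 h) (hq : q ≠ 0) :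
    ContDiff ℝ 1 (poleKernel τ h q) :=
  hh.mul <| .inv ((Complex.ofRealCLM.contDiff.mul contDiff_const).add contDiff_const)
    fun _ ↦ mul_add_ofReal_ne_zero hτ (.inr hq)

lemma abs_mul_norm_poleKernel_le (hτ : τ.im ≠ 0) (hH : ∀ a, ‖h a‖ ≤ H) (hq : q ≠ 0) (a : ℝ) :
    |a| * ‖poleKernel τ h q a‖ ≤ H * poleConst τ := by
  have hH0 : 0 ≤ H := (norm_nonneg _).trans (hH 0)
  calc |a| * ‖poleKernel τ h q a‖ = ‖h a‖ * (|a| * ‖(a * τ + q : ℂ)⁻¹‖) := by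
        rw [poleKernel, div_eq_mul_inv, norm_mul]
        ring
    _ ≤ H * poleConst τ := by
        gcongr
        exacts [hH a, abs_mul_norm_inv_le hτ hq a]

lemma deriv_poleKernel (hτ : τ.im ≠ 0) (hh : Differentiable ℝ h) (hq : q ≠ 0) (a : ℝ) :
    deriv (poleKernel τ h q) a =
      deriv h a * (a * τ + q : ℂ)⁻¹ - h a * τ * (a * τ + q : ℂ)⁻¹ ^ 2 := by
  have hne := mul_add_ofReal_ne_zero hτ (a := a) (.inr hq)
  have hden : HasDerivAt (fun a : ℝ ↦ (a * τ + q : ℂ)) τ a := by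
    simpa using ((hasDerivAt_id a).ofReal_comp.mul_const τ).add_const (q : ℂ)
  refine ((hh a).hasDerivAt.div hden hne).deriv.trans ?_
  field_simp

lemma sq_mul_norm_deriv_poleKernel_le (hτ : τ.im ≠ 0) (hh : Differentiable ℝ h)
    (hH : ∀ a, ‖h a‖ ≤ H) (hM : ∀ a, |a| * ‖deriv h a‖ ≤ M) (hq : q ≠ 0) (a : ℝ) :
    a ^ 2 * ‖deriv (poleKernel τ h q) a‖ ≤
      M * poleConst τ + H * ‖τ‖ * poleConst τ ^ 2 := by
  have hH0 : 0 ≤ H := (norm_nonneg _).trans (hH 0)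
  have hM0 : 0 ≤ M := by simpa using hM 0
  have hinv := abs_mul_norm_inv_le hτ hq a
  calc a ^ 2 * ‖deriv (poleKernel τ h q) a‖
      ≤ a ^ 2 * (‖deriv h a * (a * τ + q : ℂ)⁻¹‖ + ‖h a * τ * (a * τ + q : ℂ)⁻¹ ^ 2‖) := by
        rw [deriv_poleKernel hτ hh hq]
        gcongr
        exact norm_sub_le _ _
    _ = (|a| * ‖deriv h a‖) * (|a| * ‖(a * τ + q : ℂ)⁻¹‖) +
          ‖h a‖ * ‖τ‖ * (|a| * ‖(a * τ + q : ℂ)⁻¹‖) ^ 2 := by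
        rw [norm_mul, norm_mul, norm_mul, norm_pow, ← sq_abs a]
        ring
    _ ≤ M * poleConst τ + H * ‖τ‖ * poleConst τ ^ 2 := by
        gcongr
        exacts [hM a, hH a]

lemma norm_poleKernel_add_comp_neg_le (hτ : τ.im ≠ 0) (heven : Function.Even h)
    (hH : ∀ a, ‖h a‖ ≤ H) (hq : q ≠ 0) (a : ℝ) :
    ‖poleKernel τ h q a + poleKernel τ h q (-a)‖ ≤
      2 * H * poleConst τ ^ 2 * (|q| / (a ^ 2 + q ^ 2)) := by
  have hH0 : 0 ≤ H := (norm_nonneg _).trans (hH 0)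
  have hpos := mul_add_ofReal_ne_zero hτ (a := a) (.inr hq)
  have hneg := mul_add_ofReal_ne_zero hτ (a := -a) (.inr hq)
  have hsum : poleKernel τ h q a + poleKernel τ h q (-a) =
      2 * h a * q * ((a * τ + q : ℂ)⁻¹ * (q - a * τ)⁻¹) := by
    rw [Complex.ofReal_neg, neg_mul, neg_add_eq_sub] at hneg
    rw [poleKernel, poleKernel, heven a, Complex.ofReal_neg, neg_mul, neg_add_eq_sub]
    field_simp
    ring
  calc _ = 2 * ‖h a‖ * |q| * ‖(a * τ + q : ℂ)⁻¹ * (q - a * τ)⁻¹‖ := by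
        rw [hsum, norm_mul, norm_mul, norm_mul, RCLike.norm_ofNat, Complex.norm_real,
          Real.norm_eq_abs]
    _ ≤ 2 * H * |q| * (poleConst τ ^ 2 / (a ^ 2 + q ^ 2)) := by
        gcongr
        exacts [hH a, norm_inv_mul_inv_le hτ hq a]
    _ = _ := by ring

lemma integral_symm_eq_half_integral_add_comp_neg {K : ℝ → ℂ} (hK : Continuous K) (R : ℝ) :
    ∫ a in (-R)..R, K a = (∫ a in (-R)..R, (K a + K (-a))) / 2 := by
  rw [integral_add (hK.intervalIntegrable _ _)
    (Continuous.intervalIntegrable (by fun_prop) _ _), intervalIntegral.integral_comp_neg, neg_neg]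
  ring

lemma norm_integral_poleKernel_le (hτ : τ.im ≠ 0) (hh : Continuous h) (heven : Function.Even h)
    (hH : ∀ a, ‖h a‖ ≤ H) (hq : q ≠ 0) {R : ℝ} (hR : 0 ≤ R) :
    ‖∫ a in (-R)..R, poleKernel τ h q a‖ ≤ Real.pi * H * poleConst τ ^ 2 := by
  have hH0 : 0 ≤ H := (norm_nonneg _).trans (hH 0)
  have hK : Continuous (poleKernel τ h q) :=
    hh.div (by fun_prop) fun _ ↦ mul_add_ofReal_ne_zero hτ (.inr hq)
  have hmajorant : Continuous fun a : ℝ ↦ |q| / (a ^ 2 + q ^ 2) :=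
    continuous_const.div (by fun_prop) fun a ↦ by positivity
  have hpair : ‖∫ a in (-R)..R, (poleKernel τ h q a + poleKernel τ h q (-a))‖ ≤
      2 * H * poleConst τ ^ 2 * Real.pi :=
    calc _ ≤ ∫ a in (-R)..R, 2 * H * poleConst τ ^ 2 * (|q| / (a ^ 2 + q ^ 2)) :=
          norm_integral_le_of_norm_le (neg_le_self hR)
            (ae_of_all _ fun a _ ↦ norm_poleKernel_add_comp_neg_le hτ heven hH hq a)
            ((hmajorant.const_mul _).intervalIntegrable _ _)
      _ ≤ 2 * H * poleConst τ ^ 2 * Real.pi := by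
          rw [intervalIntegral.integral_const_mul]
          gcongr
          exact integral_abs_div_sq_add_sq_le hq _ _
  rw [integral_symm_eq_half_integral_add_comp_neg hK, norm_div, RCLike.norm_ofNat,
    div_le_iff₀ two_pos]
  linarith

theorem isCalderonZygmundKernel_poleKernel (hτ : τ.im ≠ 0) (hh : ContDiff ℝ 1 h)
    (heven : Function.Even h) (hH : ∀ a, ‖h a‖ ≤ H) (hM : ∀ a, |a| * ‖deriv h a‖ ≤ M)
    (hq : q ≠ 0) :
    IsCalderonZygmundKernel (poleKernel τ h q) (H * poleConst τ)
      (M * poleConst τ + H * ‖τ‖ * poleConst τ ^ 2) (Real.pi * H * poleConst τ ^ 2) where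
  contDiff := contDiff_poleKernel hτ hh hq
  abs_mul_norm_le := abs_mul_norm_poleKernel_le hτ hH hq
  sq_mul_norm_deriv_le :=
    sq_mul_norm_deriv_poleKernel_le hτ (hh.differentiable one_ne_zero) hH hM hq
  norm_integral_le _ := norm_integral_poleKernel_le hτ hh.continuous heven hH hq

lemma exists_tendsto_integral_eC_mul_poleKernel (hτ : τ.im ≠ 0) (hh : Integrable h)
    (hq : q ≠ 0) (r : ℝ) :
    ∃ L, Tendsto (fun T ↦ ∫ a in (-T)..T, eC (a * r : ℝ) * poleKernel τ h q a) atTop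
      (nhds L) := by
  have hinv (a : ℝ) : ‖(a * τ + q : ℂ)⁻¹‖ ≤ poleConst τ / |q| := by
    have hpos := norm_pos_iff.2 (mul_add_ofReal_ne_zero hτ (a := a) (.inr hq))
    rw [norm_inv, ← one_div, div_le_div_iff₀ hpos (abs_pos.2 hq), one_mul]
    linarith [abs_add_abs_le_poleConst_mul hτ a q, abs_nonneg a]
  have hcont : Continuous fun a : ℝ ↦ (a * τ + q : ℂ)⁻¹ :=
    Continuous.inv₀ (by fun_prop) fun a ↦ mul_add_ofReal_ne_zero hτ (.inr hq)
  have hint : Integrable fun a ↦ eC (a * r : ℝ) * poleKernel τ h q a :=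
    (hh.mul_bdd hcont.aestronglyMeasurable (ae_of_all _ hinv)).bdd_mul (c := 1)
      (Continuous.aestronglyMeasurable (by fun_prop)) (ae_of_all _ fun a ↦ (norm_eC_ofReal _).le)
  exact ⟨_, intervalIntegral_tendsto_integral hint tendsto_neg_atTop_atBot tendsto_id⟩

end PoleKernel

section Gaussian

variable {τ : ℂ}

lemma norm_eC_sq_mul (τ : ℂ) (a : ℝ) :
    ‖eC (a ^ 2 * τ)‖ = Real.exp (-(2 * Real.pi * τ.im * a ^ 2)) := by
  rw [norm_eC, ← Complex.ofReal_pow, Complex.im_ofReal_mul]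
  ring_nf

lemma norm_eC_sq_mul_le_one (hτ : 0 ≤ τ.im) (a : ℝ) : ‖eC (a ^ 2 * τ)‖ ≤ 1 := by
  rw [norm_eC_sq_mul, Real.exp_le_one_iff, neg_nonpos]
  positivity

lemma sq_mul_norm_eC_sq_mul_le (hτ : 0 < τ.im) (a : ℝ) :
    a ^ 2 * ‖eC (a ^ 2 * τ)‖ ≤ (2 * Real.pi * τ.im)⁻¹ := by
  have hexp := (Real.mul_exp_neg_le_exp_neg_one (2 * Real.pi * τ.im * a ^ 2)).trans
    (Real.exp_le_one_iff.2 (by norm_num))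
  rwa [norm_eC_sq_mul, ← mul_one (_)⁻¹, le_inv_mul_iff₀ (by positivity), ← mul_assoc]

lemma contDiff_eC_sq_mul (τ : ℂ) : ContDiff ℝ 1 fun a : ℝ ↦ eC (a ^ 2 * τ) :=
  contDiff_eC.comp ((Complex.ofRealCLM.contDiff.pow 2).mul contDiff_const)

lemma deriv_eC_sq_mul (τ : ℂ) (a : ℝ) :
    deriv (fun a : ℝ ↦ eC (a ^ 2 * τ)) a =
      eC (a ^ 2 * τ) * (2 * Real.pi * Complex.I * (2 * a * τ)) := by
  have hsq : HasDerivAt (fun a : ℝ ↦ (a ^ 2 * τ : ℂ)) (2 * a * τ) a := by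
    simpa using ((hasDerivAt_id a).ofReal_comp.pow 2).mul_const τ
  exact (hasDerivAt_eC_comp hsq).deriv

lemma abs_mul_norm_deriv_eC_sq_mul_le (hτ : 0 < τ.im) (a : ℝ) :
    |a| * ‖deriv (fun a : ℝ ↦ eC (a ^ 2 * τ)) a‖ ≤ 2 * ‖τ‖ / τ.im := by
  have hnorm : ‖(2 * Real.pi * Complex.I * (2 * a * τ) : ℂ)‖ = 4 * Real.pi * ‖τ‖ * |a| := by
    simp only [norm_mul, RCLike.norm_ofNat, Complex.norm_real, Complex.norm_I, Real.norm_eq_abs,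
      abs_of_pos Real.pi_pos]
    ring
  calc |a| * ‖deriv (fun a : ℝ ↦ eC (a ^ 2 * τ)) a‖
      = 4 * Real.pi * ‖τ‖ * (a ^ 2 * ‖eC (a ^ 2 * τ)‖) := by
        rw [deriv_eC_sq_mul, norm_mul, hnorm, ← sq_abs a]
        ring
    _ ≤ 4 * Real.pi * ‖τ‖ * (2 * Real.pi * τ.im)⁻¹ := by
        gcongr
        exact sq_mul_norm_eC_sq_mul_le hτ a
    _ = 2 * ‖τ‖ / τ.im := by field_simp; ring

lemma integrable_eC_sq_mul (hτ : 0 < τ.im) : Integrable fun a : ℝ ↦ eC (a ^ 2 * τ) := by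
  have hb : 0 < (-(2 * Real.pi * Complex.I * τ)).re := by
    simpa using mul_pos Real.two_pi_pos hτ
  refine (integrable_cexp_neg_mul_sq hb).congr (ae_of_all _ fun a ↦ ?_)
  simp only [eC]
  ring_nf

end Gaussian

section InnerIntegral

/-- The exponential `b ↦ exp(sb)` on the half-line of points of the same sign as `a`, with its sign
changed across `b = a`. Up to a unimodular constant this is the integrand of the inner integral. -/
def signedExp (a : ℝ) (s : ℂ) (b : ℝ) : ℂ :=
  Real.sign (a - b) * (if 0 < a * b then 1 else 0) * Complex.exp (s * b)

variable {a : ℝ} {s : ℂ}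

lemma signedExp_neg (a : ℝ) (s : ℂ) (b : ℝ) : signedExp (-a) (-s) (-b) = -signedExp a s b := by
  have hsign : Real.sign (-a - -b) = -Real.sign (a - b) := by
    rw [← Real.sign_neg, neg_sub_neg, neg_sub]
  rw [signedExp, signedExp, hsign, Complex.ofReal_neg, Complex.ofReal_neg, neg_mul_neg, neg_mul_neg,
    neg_mul, neg_mul]

lemma signedExp_ae_eq (ha : 0 < a) (s : ℂ) :
    signedExp a s =ᵐ[volume] fun b ↦ (Ioi 0).indicator (fun b : ℝ ↦ Complex.exp (s * b)) b -
      2 * (Ioi a).indicator (fun b : ℝ ↦ Complex.exp (s * b)) b := by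
  filter_upwards [Measure.ae_ne volume a] with b hba
  rcases hba.lt_or_gt with hba | hab
  · have hsign : Real.sign (a - b) = 1 := Real.sign_of_pos (sub_pos.2 hba)
    simp [signedExp, hsign, indicator, hba.not_gt, ha]
  · have hsign : Real.sign (a - b) = -1 := Real.sign_of_neg (sub_neg.2 hab)
    simp only [signedExp, hsign, indicator, mem_Ioi, mul_pos ha (ha.trans hab), ha.trans hab, hab,
      if_true, Complex.ofReal_neg, Complex.ofReal_one]
    ring

lemma integrable_indicator_Ioi_exp_mul (hs : s.re < 0) (c : ℝ) :
    Integrable ((Ioi c).indicator fun b : ℝ ↦ Complex.exp (s * b)) :=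
  (integrableOn_exp_mul_complex_Ioi hs c).integrable_indicator measurableSet_Ioi

lemma integrable_signedExp_of_pos (ha : 0 < a) (hs : s.re < 0) : Integrable (signedExp a s) := by
  have hexp := integrable_indicator_Ioi_exp_mul hs
  exact ((hexp 0).sub ((hexp a).const_mul 2)).congr (signedExp_ae_eq ha s).symm

lemma integral_signedExp_of_pos (ha : 0 < a) (hs : s.re < 0) :
    ∫ b, signedExp a s b = (2 * Complex.exp (s * a) - 1) / s := by
  have hexp := integrable_indicator_Ioi_exp_mul hs
  rw [integral_congr_ae (signedExp_ae_eq ha s),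
    MeasureTheory.integral_sub (hexp 0) ((hexp a).const_mul 2),
    MeasureTheory.integral_const_mul, MeasureTheory.integral_indicator measurableSet_Ioi,
    MeasureTheory.integral_indicator measurableSet_Ioi,
    integral_exp_mul_complex_Ioi hs, integral_exp_mul_complex_Ioi hs]
  simp only [Complex.ofReal_zero, mul_zero, Complex.exp_zero]
  ring

lemma signedExp_eq_neg_comp_neg (a : ℝ) (s : ℂ) :
    signedExp a s = fun b ↦ -signedExp (-a) (-s) (-b) := by
  simp only [signedExp_neg, neg_neg]

lemma integrable_signedExp (has : a * s.re < 0) : Integrable (signedExp a s) := by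
  rcases mul_neg_iff.1 has with ⟨ha, hs⟩ | ⟨ha, hs⟩
  · exact integrable_signedExp_of_pos ha hs
  · rw [signedExp_eq_neg_comp_neg]
    exact (integrable_signedExp_of_pos (neg_pos.2 ha) (by simpa using hs)).comp_neg.neg

lemma integral_signedExp (has : a * s.re < 0) :
    ∫ b, signedExp a s b = (2 * Complex.exp (s * a) - 1) / s := by
  rcases mul_neg_iff.1 has with ⟨ha, hs⟩ | ⟨ha, hs⟩
  · exact integral_signedExp_of_pos ha hs
  · rw [signedExp_eq_neg_comp_neg, MeasureTheory.integral_neg,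
      integral_neg_eq_self (signedExp (-a) (-s)),
      integral_signedExp_of_pos (neg_pos.2 ha) (by simpa using hs), Complex.ofReal_neg, neg_mul_neg,
      div_neg, neg_neg]

end InnerIntegral

section RotatedTransform

variable {τ : ℂ} {x y : ℝ}

lemma sign_div_of_pos (r : ℝ) {c : ℝ} (hc : 0 < c) : Real.sign (r / c) = Real.sign r := by
  rcases lt_trichotomy r 0 with hr | rfl | hr
  · rw [Real.sign_of_neg hr, Real.sign_of_neg (div_neg_of_neg_of_pos hr hc)]
  · rw [zero_div]
  · rw [Real.sign_of_pos hr, Real.sign_of_pos (div_pos hr hc)]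

lemma phiPlus_rotate (τ : ℂ) (a b : ℝ) :
    phiPlus τ ((a - b) / √2) ((a + b) / √2) =
      eC (a * b * τ) * Real.sign (a - b) * (if 0 < a * b then 1 else 0) := by
  have hsq : ((√2 : ℝ) : ℂ) ^ 2 = 2 := by exact_mod_cast Real.sq_sqrt zero_le_two
  have hcone : ((a - b) / √2) ^ 2 < ((a + b) / √2) ^ 2 ↔ 0 < a * b := by
    rw [div_pow, div_pow, Real.sq_sqrt zero_le_two]
    constructor <;> intro h <;> linarith
  have hform : (((((a + b) / √2 : ℝ) : ℂ) ^ 2 - (((a - b) / √2 : ℝ) : ℂ) ^ 2) / 2) = a * b := by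
    push_cast
    rw [div_pow, div_pow, hsq]
    ring
  simp only [phiPlus, hcone, hform, sign_div_of_pos _ (Real.sqrt_pos.2 two_pos)]

lemma ftPlusIntegrand_eq_eC_mul_signedExp (τ : ℂ) (x y a b : ℝ) :
    ftPlusIntegrand τ x y a b = eC (a * ((y - x) / √2) : ℝ) *
      signedExp a (2 * Real.pi * Complex.I * (a * τ + ((x + y) / √2 : ℝ))) b := by
  have hphase : -((a - b) / √2 * x) + (a + b) / √2 * y =
      a * ((y - x) / √2) + b * ((x + y) / √2) := by ring
  have hexp : Complex.exp (2 * Real.pi * Complex.I * (a * τ + ((x + y) / √2 : ℝ)) * b) =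
      eC (a * b * τ) * eC (b * ((x + y) / √2) : ℝ) := by
    rw [← eC_add, eC]
    push_cast
    ring_nf
  rw [ftPlusIntegrand, phiPlus_rotate, hphase, Complex.ofReal_add, eC_add, signedExp, hexp]
  ring

lemma mul_re_exponent_neg (hτ : 0 < τ.im) {a : ℝ} (ha : a ≠ 0) (q : ℝ) :
    a * (2 * Real.pi * Complex.I * (a * τ + q)).re < 0 := by
  have hre : (2 * Real.pi * Complex.I * (a * τ + q)).re = -(2 * Real.pi * (a * τ.im)) := by simp
  have hsq : a * (2 * Real.pi * (a * τ.im)) = 2 * Real.pi * τ.im * a ^ 2 := by ring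
  rw [hre, mul_neg, neg_lt_zero, hsq]
  positivity

lemma integrable_ftPlusIntegrand (hτ : 0 < τ.im) (x y a : ℝ) :
    Integrable (ftPlusIntegrand τ x y a) := by
  simp only [funext (ftPlusIntegrand_eq_eC_mul_signedExp τ x y a)]
  rcases eq_or_ne a 0 with rfl | ha
  · simp [signedExp]
  · exact (integrable_signedExp (mul_re_exponent_neg hτ ha _)).const_mul _

lemma integral_ftPlusIntegrand (hτ : 0 < τ.im) (x y : ℝ) {a : ℝ} (ha : a ≠ 0) :
    ∫ b, ftPlusIntegrand τ x y a b = (2 * Real.pi * Complex.I)⁻¹ *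
      (2 * (eC (a * (√2 * y) : ℝ) * poleKernel τ (fun a ↦ eC (a ^ 2 * τ)) ((x + y) / √2) a) -
        eC (a * ((y - x) / √2) : ℝ) * poleKernel τ 1 ((x + y) / √2) a) := by
  set p := (y - x) / √2 with hp
  set q := (x + y) / √2 with hq
  have hpq : √2 * y = p + q := by
    rw [hp, hq]
    field_simp
    rw [Real.sq_sqrt zero_le_two]
    ring
  have hexp : eC (a * p : ℝ) * Complex.exp (2 * Real.pi * Complex.I * (a * τ + q) * a) =
      eC (a * (p + q) : ℝ) * eC (a ^ 2 * τ) := by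
    rw [eC, eC, eC, ← Complex.exp_add, ← Complex.exp_add]
    push_cast
    ring_nf
  calc ∫ b, ftPlusIntegrand τ x y a b
      = eC (a * p : ℝ) * ((2 * Complex.exp (2 * Real.pi * Complex.I * (a * τ + q) * a) - 1) /
          (2 * Real.pi * Complex.I * (a * τ + q))) := by
        simp only [ftPlusIntegrand_eq_eC_mul_signedExp]
        rw [MeasureTheory.integral_const_mul, integral_signedExp (mul_re_exponent_neg hτ ha q)]
    _ = (2 * Real.pi * Complex.I)⁻¹ * ((2 * (eC (a * p : ℝ) *
          Complex.exp (2 * Real.pi * Complex.I * (a * τ + q) * a)) - eC (a * p : ℝ)) /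
            (a * τ + q)) := by
        rw [div_eq_mul_inv, mul_inv _ (a * τ + q : ℂ)]
        ring
    _ = _ := by
        rw [hexp, hpq]
        simp only [poleKernel, Pi.one_apply]
        ring

end RotatedTransform

section Boundedness

variable {τ : ℂ}

lemma exists_tendsto_norm_le_gaussian_poleKernel (hτ : 0 < τ.im) :
    ∃ C : ℝ, ∀ q r : ℝ, q ≠ 0 → ∃ L, Tendsto (fun T ↦ ∫ a in (-T)..T,
      eC (a * r : ℝ) * poleKernel τ (fun a ↦ eC (a ^ 2 * τ)) q a) atTop (nhds L) ∧ ‖L‖ ≤ C := by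
  have heven : Function.Even fun a : ℝ ↦ eC (a ^ 2 * τ) := fun a ↦ by simp
  have hK {q : ℝ} (hq : q ≠ 0) := isCalderonZygmundKernel_poleKernel hτ.ne' (contDiff_eC_sq_mul τ)
    heven (norm_eC_sq_mul_le_one hτ.le) (abs_mul_norm_deriv_eC_sq_mul_le hτ) hq
  exact ⟨_, fun q r hq ↦ (exists_tendsto_integral_eC_mul_poleKernel hτ.ne'
    (integrable_eC_sq_mul hτ) hq r).imp fun _ hL ↦ ⟨hL, (hK hq).norm_le_of_tendsto hL⟩⟩

lemma exists_tendsto_norm_le_one_poleKernel (hτ : τ.im ≠ 0) :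
    ∃ C : ℝ, ∀ q r : ℝ, q ≠ 0 → r ≠ 0 → ∃ L, Tendsto (fun T ↦ ∫ a in (-T)..T,
      eC (a * r : ℝ) * poleKernel τ 1 q a) atTop (nhds L) ∧ ‖L‖ ≤ C := by
  have hK {q : ℝ} (hq : q ≠ 0) := isCalderonZygmundKernel_poleKernel (h := 1) (H := 1) (M := 0) hτ
    contDiff_const (fun _ ↦ rfl) (by simp) (by simp) hq
  exact ⟨_, fun q r hq hr ↦ ((hK hq).exists_tendsto_integral_eC_mul hr).imp
    fun _ hL ↦ ⟨hL, (hK hq).norm_le_of_tendsto hL⟩⟩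

lemma integral_integral_ftPlusIntegrand (hτ : 0 < τ.im) {x y : ℝ} (hxy : x + y ≠ 0) (T : ℝ) :
    ∫ a in (-T)..T, ∫ b, ftPlusIntegrand τ x y a b = (2 * Real.pi * Complex.I)⁻¹ *
      (2 * (∫ a in (-T)..T, eC (a * (√2 * y) : ℝ) *
          poleKernel τ (fun a ↦ eC (a ^ 2 * τ)) ((x + y) / √2) a) -
        ∫ a in (-T)..T, eC (a * ((y - x) / √2) : ℝ) * poleKernel τ 1 ((x + y) / √2) a) := by
  have hq : (x + y) / √2 ≠ 0 := div_ne_zero hxy (by positivity)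
  have hint {h : ℝ → ℂ} (hh : ContDiff ℝ 1 h) (r : ℝ) : IntervalIntegrable
      (fun a ↦ eC (a * r : ℝ) * poleKernel τ h ((x + y) / √2) a) volume (-T) T := by
    have := (contDiff_poleKernel hτ.ne' hh hq).continuous
    exact Continuous.intervalIntegrable (by fun_prop) _ _
  rw [← intervalIntegral.integral_const_mul, ← intervalIntegral.integral_sub
    ((hint (contDiff_eC_sq_mul τ) _).const_mul 2) (hint (h := 1) contDiff_const _),
    ← intervalIntegral.integral_const_mul]
  refine integral_congr_ae ?_
  filter_upwards [Measure.ae_ne volume 0] with a ha _ using integral_ftPlusIntegrand hτ x y ha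

theorem exists_tendsto_norm_le_integral_ftPlusIntegrand (hτ : 0 < τ.im) :
    ∃ C : ℝ, ∀ x y : ℝ, x ^ 2 ≠ y ^ 2 → ∃ L, Tendsto (fun T ↦ ∫ a in (-T)..T,
      ∫ b, ftPlusIntegrand τ x y a b) atTop (nhds L) ∧ ‖L‖ ≤ C := by
  obtain ⟨C₁, hC₁⟩ := exists_tendsto_norm_le_gaussian_poleKernel hτ
  obtain ⟨C₂, hC₂⟩ := exists_tendsto_norm_le_one_poleKernel hτ.ne'
  refine ⟨‖(2 * Real.pi * Complex.I : ℂ)⁻¹‖ * (2 * C₁ + C₂), fun x y hxy ↦ ?_⟩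
  rw [Ne, sq_eq_sq_iff_eq_or_eq_neg, not_or] at hxy
  have hadd : x + y ≠ 0 := fun h ↦ hxy.2 (eq_neg_of_add_eq_zero_left h)
  have hsub : y - x ≠ 0 := sub_ne_zero.2 (Ne.symm hxy.1)
  have hq : (x + y) / √2 ≠ 0 := div_ne_zero hadd (by positivity)
  obtain ⟨L₁, hL₁, hnorm₁⟩ := hC₁ _ (√2 * y) hq
  obtain ⟨L₂, hL₂, hnorm₂⟩ := hC₂ _ ((y - x) / √2) hq (div_ne_zero hsub (by positivity))
  refine ⟨(2 * Real.pi * Complex.I)⁻¹ * (2 * L₁ - L₂), ?_, ?_⟩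
  · simp only [integral_integral_ftPlusIntegrand hτ hadd]
    exact ((hL₁.const_mul 2).sub hL₂).const_mul _
  · rw [norm_mul]
    gcongr
    refine norm_sub_le_of_le ?_ hnorm₂
    rw [norm_mul, RCLike.norm_ofNat]
    gcongr

end Boundedness

/-- the regularized Fourier transform of `φ⁺_τ` exists (as an iterated
improper integral) on `{x² ≠ y²}` and is bounded there. -/
theorem stmt3 (τ : ℂ) (hτ : 0 < τ.im) :
    ∃ (F : ℝ → ℝ → ℂ) (g : ℝ → ℝ → ℝ → ℂ) (C : ℝ),
      ∀ x y : ℝ, x ^ 2 ≠ y ^ 2 →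
        (∀ a : ℝ, Tendsto (fun T : ℝ => ∫ b in (-T)..T, ftPlusIntegrand τ x y a b)
          atTop (nhds (g x y a))) ∧
        Tendsto (fun T' : ℝ => ∫ a in (-T')..T', g x y a) atTop (nhds (F x y)) ∧
        ‖F x y‖ ≤ C := by
  obtain ⟨C, hC⟩ := exists_tendsto_norm_le_integral_ftPlusIntegrand hτ
  choose! F hF using hC
  exact ⟨F, fun x y a ↦ ∫ b, ftPlusIntegrand τ x y a b, C, fun x y hxy ↦
    ⟨fun a ↦ intervalIntegral_tendsto_integral (integrable_ftPlusIntegrand hτ x y a)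
      tendsto_neg_atTop_atBot tendsto_id, hF x y hxy⟩⟩

end
end
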